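/- Let f ∈ ℂ[x,y,z,w] be a reduced homogeneous polynomial of degree d defining a surface D: f = 0 in P³, tame with respect to the pair ρ1, ρ2 of degrees e1 ≤ e2, and set e3 = d − 1 − e1 − e2 with e3 ≥ e2. Let B(f) be the Bourbaki ideal of AR(f): the ideal of all h ∈ S such that h·f = det M(E,ρ1,ρ2,ρ) for some ρ ∈ AR(f), where M(E,ρ1,ρ2,ρ) is the 4×4 matrix with rows (x,y,z,w), ρ1, ρ2, ρ. Then D is nearly free with exponents e1, e2, e3+1 if and only if dim_ℂ B(f)_1 = 2, where B(f)_1 is the space of linear forms in B(f). -/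

import Mathlib

open MvPolynomial Matrix

noncomputable section

/-- The polynomial ring `S = ℂ[x,y,z,w]`. -/
abbrev S4 : Type := MvPolynomial (Fin 4) ℂ

/-- The `S`-linear map sending `ρ = (α,β,γ,δ)` to `α fₓ + β f_y + γ f_z + δ f_w`. -/
def jacPair (f : S4) : (Fin 4 → S4) →ₗ[S4] S4 where
  toFun ρ := ∑ i, ρ i * pderiv i f
  map_add' a b := by simp [add_mul, Finset.sum_add_distrib]
  map_smul' c a := by simp [Finset.mul_sum, mul_assoc]

/-- `AR(f)`: the `S`-module of all Jacobian syzygies of `f`. -/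
def AR4 (f : S4) : Submodule S4 (Fin 4 → S4) := LinearMap.ker (jacPair f)

/-- A vector of polynomials is homogeneous of degree `q` if each component is. -/
def VecHomog (ρ : Fin 4 → S4) (q : ℕ) : Prop := ∀ i, (ρ i).IsHomogeneous q

/-- `AR(f)_k`, the degree-`k` homogeneous part of `AR(f)`, as a `ℂ`-subspace. -/
def ARgr (f : S4) (k : ℕ) : Submodule ℂ (Fin 4 → S4) :=
  (AR4 f).restrictScalars ℂ ⊓ Submodule.pi Set.univ (fun _ => homogeneousSubmodule (Fin 4) ℂ k)

/-- `ar(f)_k = dim_ℂ AR(f)_k`. -/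
def arDim (f : S4) (k : ℕ) : ℕ := Module.finrank ℂ (ARgr f k)

/-- `ar(f)_q` for an integer index, with the convention that it vanishes for `q < 0`. -/
def arZ (f : S4) (q : ℤ) : ℕ := if 0 ≤ q then arDim f q.toNat else 0

/-- The Jacobian ideal of `f`. -/
def JacIdeal (f : S4) : Ideal S4 := Ideal.span (Set.range fun i : Fin 4 => pderiv i f)

/-- `m(f)_k = dim_ℂ M(f)_k`, the dimension of the degree-`k` part of the Milnor algebra. -/
def milnor4 (f : S4) (k : ℕ) : ℕ :=
  Module.finrank ℂ ((homogeneousSubmodule (Fin 4) ℂ k).map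
    (Submodule.mkQ ((JacIdeal f).restrictScalars ℂ)))

/-- `binom(m,3)` with the convention that it is `0` for `m < 3`. -/
def binom3 (m : ℤ) : ℕ := m.toNat.choose 3

/-- All four `3×3` minors of the `3×4` matrix with rows `ρ1, ρ2, ρ` vanish. -/
def MinorsVanish3 (ρ1 ρ2 ρ : Fin 4 → S4) : Prop :=
  ∀ j : Fin 4,
    (Matrix.of fun i k => ![ρ1, ρ2, ρ] i (j.succAbove k) : Matrix (Fin 3) (Fin 3) S4).det = 0

/-- `D : f = 0` is tame with respect to `ρ1, ρ2`: every homogeneous syzygy `ρ` for which all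
`3×3` minors of the matrix with rows `ρ1, ρ2, ρ` vanish lies in `S·ρ1 + S·ρ2`. -/
def TamePair (f : S4) (ρ1 ρ2 : Fin 4 → S4) : Prop :=
  ∀ ρ ∈ AR4 f, ∀ q : ℕ, VecHomog ρ q → MinorsVanish3 ρ1 ρ2 ρ →
    ∃ a b : S4, ρ = a • ρ1 + b • ρ2

/-- `ρ1` is a nonzero homogeneous syzygy of minimal degree `e1`, and `ρ2` is a homogeneous
syzygy of minimal degree `e2 ≥ e1` among the homogeneous syzygies not in `S·ρ1`. -/
def MinimalPair (f : S4) (ρ1 ρ2 : Fin 4 → S4) (e1 e2 : ℕ) : Prop :=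
  ρ1 ∈ AR4 f ∧ ρ1 ≠ 0 ∧ VecHomog ρ1 e1 ∧
  (∀ ρ ∈ AR4 f, ∀ q : ℕ, ρ ≠ 0 → VecHomog ρ q → e1 ≤ q) ∧
  ρ2 ∈ AR4 f ∧ VecHomog ρ2 e2 ∧ e1 ≤ e2 ∧ (∀ a : S4, ρ2 ≠ a • ρ1) ∧
  (∀ ρ ∈ AR4 f, ∀ q : ℕ, VecHomog ρ q → (∀ a : S4, ρ ≠ a • ρ1) → e2 ≤ q)

/-- `D : f = 0` is a free surface with exponents `d1 ≤ d2 ≤ d3`: `AR(f)` is a free graded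
`S`-module with a homogeneous basis of degrees `d1, d2, d3`. -/
def IsFreeWith (f : S4) (d1 d2 d3 : ℕ) : Prop :=
  d1 ≤ d2 ∧ d2 ≤ d3 ∧
  ∃ ρ1 ρ2 ρ3 : Fin 4 → S4,
    ρ1 ∈ AR4 f ∧ ρ2 ∈ AR4 f ∧ ρ3 ∈ AR4 f ∧
    VecHomog ρ1 d1 ∧ VecHomog ρ2 d2 ∧ VecHomog ρ3 d3 ∧
    (∀ ρ ∈ AR4 f, ∃ a b c : S4, ρ = a • ρ1 + b • ρ2 + c • ρ3) ∧
    (∀ a b c : S4, a • ρ1 + b • ρ2 + c • ρ3 = 0 → a = 0 ∧ b = 0 ∧ c = 0)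

/-- `D : f = 0` is a nearly free surface with exponents `d1 ≤ d2 ≤ d3` (`d4 = d3`):
`AR(f)` is generated by four homogeneous syzygies of degrees `d1, d2, d3, d3`,
with `d3 = d - (d1 + d2)`, whose module of relations is generated by a single relation
`a₁ρ₁ + a₂ρ₂ + a₃ρ₃ + a₄ρ₄ = 0` with `a₁, a₂, a₃, a₄` homogeneous of degrees
`d3-d1+1, d3-d2+1, 1, 1`. -/
def IsNearlyFreeWith (f : S4) (d d1 d2 d3 : ℕ) : Prop :=
  d1 ≤ d2 ∧ d2 ≤ d3 ∧ d1 + d2 + d3 = d ∧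
  ∃ (ρ : Fin 4 → Fin 4 → S4) (a : Fin 4 → S4),
    (∀ i, ρ i ∈ AR4 f) ∧
    VecHomog (ρ 0) d1 ∧ VecHomog (ρ 1) d2 ∧ VecHomog (ρ 2) d3 ∧ VecHomog (ρ 3) d3 ∧
    (∀ σ ∈ AR4 f, ∃ b : Fin 4 → S4, σ = ∑ i, b i • ρ i) ∧
    (a 0).IsHomogeneous (d3 - d1 + 1) ∧ (a 1).IsHomogeneous (d3 - d2 + 1) ∧
    (a 2).IsHomogeneous 1 ∧ (a 3).IsHomogeneous 1 ∧
    a ≠ 0 ∧ (∑ i, a i • ρ i) = 0 ∧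
    (∀ b : Fin 4 → S4, (∑ i, b i • ρ i) = 0 → ∃ c : S4, b = c • a)

/-- `D : f = 0` is tame: it is tame with respect to some pair `ρ1, ρ2` chosen as in the paper. -/
def IsTame (f : S4) : Prop :=
  ∃ (ρ1 ρ2 : Fin 4 → S4) (e1 e2 : ℕ), MinimalPair f ρ1 ρ2 e1 e2 ∧ TamePair f ρ1 ρ2

/-- The `4×4` matrix with rows the Euler vector field `(x,y,z,w)` and `ρ1, ρ2, ρ`. -/
def EMat (ρ1 ρ2 ρ : Fin 4 → S4) : Matrix (Fin 4) (Fin 4) S4 :=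
  Matrix.of ![fun i => X i, ρ1, ρ2, ρ]

lemma EMat_eq (ρ1 ρ2 ρ : Fin 4 → S4) :
    EMat ρ1 ρ2 ρ = (EMat ρ1 ρ2 0).updateRow 3 ρ := by
  ext i j
  fin_cases i <;> simp [EMat, Matrix.updateRow_apply]

/-- `ρ ↦ det M(E, ρ1, ρ2, ρ)` as an `S`-linear map. -/
def vdet (ρ1 ρ2 : Fin 4 → S4) : (Fin 4 → S4) →ₗ[S4] S4 where
  toFun ρ := (EMat ρ1 ρ2 ρ).det
  map_add' a b := by
    show (EMat ρ1 ρ2 (a + b)).det = (EMat ρ1 ρ2 a).det + (EMat ρ1 ρ2 b).det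
    rw [EMat_eq ρ1 ρ2 (a + b), EMat_eq ρ1 ρ2 a, EMat_eq ρ1 ρ2 b, Matrix.det_updateRow_add]
  map_smul' c a := by
    show (EMat ρ1 ρ2 (c • a)).det = c * (EMat ρ1 ρ2 a).det
    rw [EMat_eq ρ1 ρ2 (c • a), EMat_eq ρ1 ρ2 a]
    simp [Matrix.det_updateRow_smul]

/-- The degree-one part `B(f)₁` of the Bourbaki ideal `B(f)`: the space of linear forms `h`
such that `h·f = det M(E,ρ1,ρ2,ρ)` for some `ρ ∈ AR(f)`. -/
def Bf1 (f : S4) (ρ1 ρ2 : Fin 4 → S4) : Submodule ℂ S4 :=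
  homogeneousSubmodule (Fin 4) ℂ 1 ⊓
    Submodule.comap (LinearMap.mulRight ℂ f)
      (Submodule.restrictScalars ℂ (Submodule.map (vdet ρ1 ρ2) (AR4 f)))

/-!
Dividing `det M(E, ρ1, ρ2, ρ)` by `f` defines an `S`-linear map `β` from `AR(f)` onto `B(f)`, and
tameness says exactly that `0 → Sρ1 ⊕ Sρ2 → AR(f) → B(f) → 0` is exact.

If `D` is nearly free, the single relation lives in degree `e3 + 2`, so in degree `e3 + 1` the
dimension of `AR(f)` is read off the four generators, and comparison with the exact sequence
leaves `dim B(f)₁ = 2`.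

Conversely, let `β r, β s` be a basis of `B(f)₁`. They generate a prime ideal `P`. Multiplying
the Koszul relation `β s • r - β r • s = a • ρ1 + b • ρ2` by `β t` shows that an element `β t ∉ P`
forces `a, b ∈ P`; correcting `r` by multiples of `ρ1, ρ2` then makes it divisible by `β r`, so
some syzygy is mapped to `1` and `B(f)₁` contains all linear forms, which is absurd. Hence
`B(f) = P` is a complete intersection, `AR(f)` is generated by `ρ1, ρ2, r, s`, and the Koszul
relation generates their relations.
-/

section PolynomialRing

variable {σ R K : Type*}

lemma homogeneousComponent_mul_of_isHomogeneous [CommSemiring R] {g : MvPolynomial σ R} {k : ℕ}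
    (hg : g.IsHomogeneous k) (p : MvPolynomial σ R) (n : ℕ) :
    homogeneousComponent (n + k) (p * g) = homogeneousComponent n p * g := by
  let _ := MvPolynomial.gradedAlgebra (σ := σ) (R := R)
  rw [← decomposition.decompose'_apply, ← decomposition.decompose'_apply]
  exact DirectSum.coe_decompose_mul_add_of_right_mem (homogeneousSubmodule σ R) hg

lemma eq_zero_of_isHomogeneous_of_dvd [CommRing R] [IsDomain R] {a b : MvPolynomial σ R} {m n : ℕ}
    (ha : a.IsHomogeneous n) (hb : b.IsHomogeneous m) (hmn : m < n) (hab : a ∣ b) : b = 0 := by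
  by_contra hb0
  obtain ⟨c, rfl⟩ := hab
  have hdeg := totalDegree_mul_of_isDomain (left_ne_zero_of_mul hb0) (right_ne_zero_of_mul hb0)
  rw [hb.totalDegree hb0, ha.totalDegree (left_ne_zero_of_mul hb0)] at hdeg
  lia

lemma exists_homogeneousComponent_ne_zero [CommSemiring R] {p : MvPolynomial σ R} (hp : p ≠ 0) :
    ∃ q ≤ p.totalDegree, homogeneousComponent q p ≠ 0 := by
  contrapose! hp
  rw [← sum_homogeneousComponent p]
  exact Finset.sum_eq_zero fun q hq => hp q (Finset.mem_range_succ_iff.mp hq)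

lemma sum_homogeneousComponent_of_totalDegree_le [CommSemiring R] {p : MvPolynomial σ R} {d : ℕ}
    (hd : p.totalDegree ≤ d) : ∑ q ∈ Finset.range (d + 1), homogeneousComponent q p = p := by
  conv_rhs => rw [← sum_homogeneousComponent p]
  refine (Finset.sum_subset (Finset.range_mono (by lia)) fun q _ hq => ?_).symm
  exact homogeneousComponent_eq_zero _ _ (by simpa [Nat.lt_succ_iff] using hq)

lemma isHomogeneous_det {n : Type*} [Fintype n] [DecidableEq n] [CommRing R]
    {M : Matrix n n (MvPolynomial σ R)} {k : n → ℕ} (hM : ∀ i j, (M i j).IsHomogeneous (k i)) :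
    M.det.IsHomogeneous (∑ i, k i) := by
  rw [Matrix.det_apply]
  refine IsHomogeneous.sum _ _ _ fun s _ => ?_
  have hprod : (∏ i, M (s i) i).IsHomogeneous (∑ i, k (s i)) :=
    IsHomogeneous.prod _ _ _ fun i _ => hM _ _
  rw [Equiv.sum_comp s k] at hprod
  exact (homogeneousSubmodule σ R _).toAddSubgroup.zsmul_mem hprod _

lemma totalDegree_pderiv_lt [CommSemiring R] {p : MvPolynomial σ R} {i : σ} (h : pderiv i p ≠ 0) :
    (pderiv i p).totalDegree < p.totalDegree := by
  obtain ⟨m, hm, hmax⟩ := Finset.exists_mem_eq_sup _ (support_nonempty.mpr h) Finsupp.degree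
  have hcoeff := mem_support_iff.mp hm
  rw [coeff_pderiv] at hcoeff
  calc (pderiv i p).totalDegree = m.degree := hmax
    _ < (m + Finsupp.single i 1).degree := by simp
    _ ≤ p.totalDegree := le_totalDegree (mem_support_iff.mpr (left_ne_zero_of_mul hcoeff))

lemma exists_pderiv_ne_zero [CommSemiring R] [NoZeroDivisors R] [CharZero R]
    {p : MvPolynomial σ R} (h : p.totalDegree ≠ 0) : ∃ i, pderiv i p ≠ 0 := by
  obtain ⟨m, hm, i, hi⟩ : ∃ m ∈ p.support, ∃ i, m i ≠ 0 := by
    simpa [totalDegree_eq_zero_iff] using h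
  refine ⟨i, fun h0 => ?_⟩
  have hcoeff := coeff_pderiv (i := i) p (m - Finsupp.single i 1)
  rw [h0, coeff_zero,
    tsub_add_cancel_of_le (Finsupp.single_le_iff.mpr (Nat.one_le_iff_ne_zero.mpr hi))] at hcoeff
  exact mul_ne_zero (mem_support_iff.mp hm) (Nat.cast_add_one_ne_zero _) hcoeff.symm

variable [Field K]

lemma isUnit_of_totalDegree_eq_zero {p : MvPolynomial σ K} (hp : p ≠ 0)
    (hdeg : p.totalDegree = 0) : IsUnit p := by
  rw [totalDegree_eq_zero_iff_eq_C] at hdeg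
  rw [hdeg, C_ne_zero] at hp
  rw [hdeg]
  exact hp.isUnit.map C

lemma isUnit_of_forall_dvd_pderiv [CharZero K] {p : MvPolynomial σ K} (hp : p ≠ 0)
    (h : ∀ i, p ∣ pderiv i p) : IsUnit p := by
  refine isUnit_of_totalDegree_eq_zero hp ?_
  by_contra hdeg
  obtain ⟨i, hi⟩ := exists_pderiv_ne_zero hdeg
  obtain ⟨c, hc⟩ := h i
  have hlt := totalDegree_pderiv_lt hi
  rw [hc] at hi hlt
  rw [totalDegree_mul_of_isDomain hp (right_ne_zero_of_mul hi)] at hlt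
  lia

lemma dvd_of_forall_dvd_mul_pderiv [CharZero K] {f p : MvPolynomial σ K} (hf : Squarefree f)
    (h : ∀ i, f ∣ p * pderiv i f) : f ∣ p := by
  obtain ⟨p', g, c, hrel, rfl, rfl⟩ :=
    UniqueFactorizationMonoid.exists_reduced_factors' p f hf.ne_zero
  obtain ⟨hc, hg⟩ := mul_ne_zero_iff.mp hf.ne_zero
  have hdvd (i : σ) : g ∣ pderiv i g := by
    have hcg : g ∣ pderiv i (c * g) := hrel.symm.dvd_of_dvd_mul_left <|
      (mul_dvd_mul_iff_left hc).mp (by simpa only [mul_assoc] using h i)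
    rw [pderiv_mul, dvd_add_right (Dvd.intro_left _ rfl)] at hcg
    exact (squarefree_mul_iff.mp hf).1.symm.dvd_of_dvd_mul_left hcg
  exact mul_dvd_mul_left c (isUnit_of_forall_dvd_pderiv hg hdvd).dvd

/- The linear change of variables `X i ↦ X i - π (X i)`, where `π` projects the linear forms onto
the span of `s`, has kernel `Ideal.span s`. -/
lemma isPrime_span_of_forall_isHomogeneous_one {s : Set (MvPolynomial σ K)}
    (hs : ∀ p ∈ s, p.IsHomogeneous 1) : (Ideal.span s).IsPrime := by
  set W := Submodule.span K s
  have hW : W ≤ (Ideal.span s).restrictScalars K := Submodule.span_le.mpr Ideal.subset_span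
  obtain ⟨π, hπ⟩ := W.subtype.exists_leftInverse_of_injective (Submodule.ker_subtype W)
  let φ : MvPolynomial σ K →ₐ[K] MvPolynomial σ K :=
    aeval fun i => X i - (π (X i) : MvPolynomial σ K)
  have hφ_linear {p : MvPolynomial σ K} (hp : p.IsHomogeneous 1) : φ p = p - π p := by
    rw [← mem_homogeneousSubmodule, homogeneousSubmodule_one_eq_span_X] at hp
    have heq : Set.EqOn φ.toLinearMap
        (LinearMap.id - W.subtype ∘ₗ π : MvPolynomial σ K →ₗ[K] MvPolynomial σ K)
        (Set.range X) := by
      rintro _ ⟨i, rfl⟩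
      simp [φ]
    exact LinearMap.eqOn_span heq hp
  have hφ_sub (p : MvPolynomial σ K) : p - φ p ∈ Ideal.span s := by
    have heq : Ideal.Quotient.mkₐ K (Ideal.span s) = (Ideal.Quotient.mkₐ K _).comp φ := by
      refine algHom_ext fun i => ?_
      simp [φ, Ideal.Quotient.eq_zero_iff_mem.mpr (hW (π (X i)).2)]
    exact Ideal.Quotient.eq.mp (DFunLike.congr_fun heq p)
  have hker : RingHom.ker φ = Ideal.span s := by
    refine le_antisymm (fun p hp => ?_) (Ideal.span_le.mpr fun p hp => ?_)
    · simpa [(RingHom.mem_ker).mp hp] using hφ_sub p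
    · have hπp : π p = ⟨p, Submodule.subset_span hp⟩ :=
        LinearMap.congr_fun hπ ⟨p, Submodule.subset_span hp⟩
      simp [hφ_linear (hs p hp), hπp]
  exact hker ▸ RingHom.ker_isPrime φ

lemma isRelPrime_of_linearIndependent {a b : MvPolynomial σ K} (ha : a.IsHomogeneous 1)
    (hb : b.IsHomogeneous 1) (hab : LinearIndependent K ![a, b]) : IsRelPrime a b := by
  have ha0 : a ≠ 0 := hab.ne_zero 0
  have hb0 : b ≠ 0 := hab.ne_zero 1
  have hprime : Prime a := (Ideal.span_singleton_prime ha0).mp <|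
    isPrime_span_of_forall_isHomogeneous_one (by simpa using ha)
  refine hprime.irreducible.isRelPrime_iff_not_dvd.mpr ?_
  rintro ⟨c, rfl⟩
  have hdeg := totalDegree_mul_of_isDomain ha0 (right_ne_zero_of_mul hb0)
  rw [ha.totalDegree ha0, hb.totalDegree hb0, left_eq_add, totalDegree_eq_zero_iff_eq_C] at hdeg
  refine (LinearIndependent.pair_iff' ha0).mp hab (coeff 0 c) ?_
  rw [smul_eq_C_mul, ← hdeg, mul_comm]

end PolynomialRing

section LinearAlgebra

variable {R : Type*} [CommRing R]

lemma linearIndependent_pair_of_forall_isUnit {ι : Type*} [IsDomain R]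
    [UniqueFactorizationMonoid R] {u v : ι → R}
    (hu : ∀ (b : R) (w : ι → R), u = b • w → IsUnit b) (hv : ∀ a : R, v ≠ a • u) :
    LinearIndependent R ![u, v] := by
  have hu0 : u ≠ 0 := by
    rintro rfl
    exact not_isUnit_zero (hu 0 0 (smul_zero 0).symm)
  refine LinearIndependent.pair_iff.mpr fun s t hst => ?_
  obtain rfl : t = 0 := by
    by_contra ht
    obtain ⟨s', t', c, hrel, rfl, rfl⟩ :=
      UniqueFactorizationMonoid.exists_reduced_factors' s t ht
    have hst' : s' • u + t' • v = 0 := by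
      rw [mul_smul, mul_smul, ← smul_add] at hst
      exact (smul_eq_zero.mp hst).resolve_left (left_ne_zero_of_mul ht)
    have hdvd (i : ι) : t' ∣ u i := hrel.symm.dvd_of_dvd_mul_left
      ⟨-v i, (eq_neg_of_add_eq_zero_left (congrFun hst' i)).trans (mul_neg _ _).symm⟩
    choose w hw using hdvd
    obtain ⟨t', rfl⟩ := hu t' w (funext hw)
    refine hv (-(↑t'⁻¹ * s')) (smul_left_cancel t' ?_)
    rw [Units.smul_def, Units.smul_def, smul_smul, mul_neg, Units.mul_inv_cancel_left, neg_smul]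
    exact eq_neg_of_add_eq_zero_right hst'
  rw [zero_smul, add_zero] at hst
  exact ⟨(smul_eq_zero.mp hst).resolve_right hu0, rfl⟩

lemma det_mul_eq_adjugate_mul_of_mulVec_eq_single {n : Type*} [Fintype n] [DecidableEq n]
    {A : Matrix n n R} {v : n → R} {i : n} {c : R} (h : A *ᵥ v = Pi.single i c) (j : n) :
    A.det * v j = A.adjugate j i * c := by
  have := congrFun (congrArg (A.adjugate *ᵥ ·) h) j
  simpa [Matrix.mulVec_mulVec, Matrix.adjugate_mul, Matrix.smul_mulVec, mul_comm] using this

end LinearAlgebra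

section RankOneQuotient

variable {R M : Type*} [CommRing R] [AddCommGroup M] [Module R M]
variable {β : M →ₗ[R] R} {p q r s : M}

lemma exists_koszul_syzygy (hker : LinearMap.ker β = Submodule.span R {p, q}) (m m' : M) :
    ∃ a b : R, β m • m' - β m' • m = a • p + b • q := by
  have hmem : β m • m' - β m' • m ∈ LinearMap.ker β := by simp [mul_comm]
  rw [hker] at hmem
  obtain ⟨a, b, hab⟩ := Submodule.mem_span_pair.mp hmem
  exact ⟨a, b, hab.symm⟩

lemma koszul_coeff_mul_mem_span (hker : LinearMap.ker β = Submodule.span R {p, q})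
    (hpq : LinearIndependent R ![p, q]) {a b : R} (hab : β s • r - β r • s = a • p + b • q)
    (t : M) : β t * a ∈ Ideal.span {β r, β s} ∧ β t * b ∈ Ideal.span {β r, β s} := by
  obtain ⟨a₁, b₁, h₁⟩ := exists_koszul_syzygy hker t r
  obtain ⟨a₂, b₂, h₂⟩ := exists_koszul_syzygy hker t s
  have hcomb : (β t * a - β s * a₁ + β r * a₂) • p + (β t * b - β s * b₁ + β r * b₂) • q = 0 := by
    linear_combination (norm := module) (-β t) • hab + β s • h₁ - β r • h₂
  obtain ⟨ha, hb⟩ := LinearIndependent.pair_iff.mp hpq _ _ hcomb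
  exact ⟨Ideal.mem_span_pair.mpr ⟨-a₂, a₁, by linear_combination -ha⟩,
    Ideal.mem_span_pair.mpr ⟨-b₂, b₁, by linear_combination -hb⟩⟩

lemma range_eq_span_pair_of_isPrime [IsDomain R]
    (hker : LinearMap.ker β = Submodule.span R {p, q}) (hpq : LinearIndependent R ![p, q])
    (hr : β r ≠ 0) (hprime : (Ideal.span {β r, β s}).IsPrime)
    (hdiv : ∀ m m' : M, β s • m = β r • m' → ∃ τ, m = β r • τ) (hone : 1 ∉ LinearMap.range β) :
    LinearMap.range β = Ideal.span {β r, β s} := by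
  have hp : β p = 0 := hker.ge (Submodule.mem_span_of_mem (by simp))
  have hq : β q = 0 := hker.ge (Submodule.mem_span_of_mem (by simp))
  refine le_antisymm ?_ (Ideal.span_le.mpr (by rintro _ (rfl | rfl) <;> exact ⟨_, rfl⟩))
  rintro _ ⟨t, rfl⟩
  by_contra ht
  obtain ⟨a, b, hab⟩ := exists_koszul_syzygy hker s r
  have hmem := koszul_coeff_mul_mem_span hker hpq hab t
  obtain ⟨u, v, rfl⟩ := Ideal.mem_span_pair.mp ((hprime.mem_or_mem hmem.1).resolve_left ht)
  obtain ⟨u', v', rfl⟩ := Ideal.mem_span_pair.mp ((hprime.mem_or_mem hmem.2).resolve_left ht)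
  obtain ⟨τ, hτ⟩ := hdiv (r - v • p - v' • q) (s + u • p + u' • q)
    (by linear_combination (norm := module) hab)
  refine hone ⟨τ, mul_left_cancel₀ hr ?_⟩
  calc β r * β τ = β (r - v • p - v' • q) := by rw [hτ, map_smul, smul_eq_mul]
    _ = β r * 1 := by simp [hp, hq]

lemma exists_eq_combination_of_range_eq_span_pair
    (hker : LinearMap.ker β = Submodule.span R {p, q})
    (hrange : LinearMap.range β = Ideal.span {β r, β s}) (m : M) :
    ∃ b : Fin 4 → R, m = b 0 • p + b 1 • q + b 2 • r + b 3 • s := by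
  obtain ⟨u, v, huv⟩ := Ideal.mem_span_pair.mp (hrange.le ⟨m, rfl⟩)
  have hmem : m - u • r - v • s ∈ LinearMap.ker β := by simp [← huv]
  rw [hker] at hmem
  obtain ⟨a, b, hab⟩ := Submodule.mem_span_pair.mp hmem
  have hm : m = a • p + b • q + u • r + v • s := by linear_combination (norm := module) -hab
  exact ⟨![a, b, u, v], hm⟩

lemma exists_eq_smul_of_combination_eq_zero [IsDomain R] [DecompositionMonoid R]
    (hker : LinearMap.ker β = Submodule.span R {p, q}) (hpq : LinearIndependent R ![p, q])
    (hs : β s ≠ 0) (hrs : IsRelPrime (β r) (β s)) {A B : R}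
    (hAB : β s • r - β r • s = A • p + B • q) {b : Fin 4 → R}
    (hb : b 0 • p + b 1 • q + b 2 • r + b 3 • s = 0) :
    ∃ k : R, b = k • ![-A, -B, β s, -β r] := by
  have hp : β p = 0 := hker.ge (Submodule.mem_span_of_mem (by simp))
  have hq : β q = 0 := hker.ge (Submodule.mem_span_of_mem (by simp))
  have hβ : b 2 * β r + b 3 * β s = 0 := by simpa [hp, hq] using congrArg β hb
  obtain ⟨k, hk⟩ : β s ∣ b 2 :=
    hrs.symm.dvd_of_dvd_mul_right ⟨-b 3, by linear_combination hβ⟩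
  have hb3 : b 3 = -(k * β r) := mul_right_cancel₀ hs (by linear_combination hβ - β r * hk)
  rw [hk, hb3] at hb
  obtain ⟨hA, hB⟩ := LinearIndependent.pair_iff.mp hpq (b 0 + k * A) (b 1 + k * B)
    (by linear_combination (norm := module) hb - k • hAB)
  refine ⟨k, funext fun i => ?_⟩
  fin_cases i
  · exact (eq_neg_of_add_eq_zero_left hA).trans (mul_neg k A).symm
  · exact (eq_neg_of_add_eq_zero_left hB).trans (mul_neg k B).symm
  · exact hk.trans (mul_comm _ _)
  · exact hb3.trans (mul_neg k _).symm

end RankOneQuotient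

section GradedVectors

/-- The degree-`q` component of a vector of polynomials, taken entrywise. -/
def vecComponent (q : ℕ) : (Fin 4 → S4) →ₗ[ℂ] Fin 4 → S4 :=
  (homogeneousComponent q).compLeft (Fin 4)

/-- The `ℂ`-space of homogeneous vectors of degree `n` in a submodule `N` of `S⁴`; for
`N = AR(f)` this is `ARgr f n`. -/
def degreePart (N : Submodule S4 (Fin 4 → S4)) (n : ℕ) : Submodule ℂ (Fin 4 → S4) :=
  N.restrictScalars ℂ ⊓ Submodule.pi Set.univ fun _ => homogeneousSubmodule (Fin 4) ℂ n

/-- The map `b ↦ ∑ i, b i • ρ i` on tuples `b` of homogeneous polynomials of degrees `m i`. -/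
def homogeneousCombination {ι : Type*} [Fintype ι] (ρ : ι → Fin 4 → S4) (m : ι → ℕ) :
    (∀ i, homogeneousSubmodule (Fin 4) ℂ (m i)) →ₗ[ℂ] Fin 4 → S4 where
  toFun b := ∑ i, (b i : S4) • ρ i
  map_add' b c := by simp [add_smul, Finset.sum_add_distrib]
  map_smul' c b := by simp [Finset.smul_sum]

variable {N : Submodule S4 (Fin 4 → S4)} {ρ : Fin 4 → S4} {p : S4} {k n q : ℕ}

lemma vecHomog_vecComponent (q : ℕ) (ρ : Fin 4 → S4) : VecHomog (vecComponent q ρ) q :=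
  fun i => homogeneousComponent_isHomogeneous q (ρ i)

lemma VecHomog.vecComponent_eq_self (h : VecHomog ρ q) : vecComponent q ρ = ρ :=
  funext fun i => homogeneousComponent_eq_self (h i)

lemma VecHomog.smul (hp : p.IsHomogeneous k) (hρ : VecHomog ρ n) : VecHomog (p • ρ) (k + n) :=
  fun i => hp.mul (hρ i)

lemma VecHomog.vecComponent_smul (hρ : VecHomog ρ k) (p : S4) (q : ℕ) :
    vecComponent (q + k) (p • ρ) = homogeneousComponent q p • ρ :=
  funext fun i => homogeneousComponent_mul_of_isHomogeneous (hρ i) p q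

lemma mem_of_forall_vecComponent_mem (h : ∀ q, vecComponent q ρ ∈ N) : ρ ∈ N := by
  have hsum : ∑ q ∈ Finset.range (Finset.univ.sup (totalDegree ∘ ρ) + 1), vecComponent q ρ = ρ := by
    funext i
    rw [Finset.sum_apply]
    exact sum_homogeneousComponent_of_totalDegree_le
      (Finset.le_sup (f := totalDegree ∘ ρ) (Finset.mem_univ i))
  exact hsum ▸ Submodule.sum_mem _ fun q _ => h q

lemma map_vecComponent {L : (Fin 4 → S4) →ₗ[S4] S4}
    (hL : ∀ i, (L (Pi.single i 1)).IsHomogeneous k) (ρ : Fin 4 → S4) (q : ℕ) :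
    L (vecComponent q ρ) = homogeneousComponent (q + k) (L ρ) := by
  have hsum (σ : Fin 4 → S4) : L σ = ∑ i, σ i * L (Pi.single i 1) := by
    conv_lhs => rw [pi_eq_sum_univ' σ, map_sum]
    simp only [map_smul, smul_eq_mul]
  rw [hsum ρ, hsum, map_sum]
  exact Finset.sum_congr rfl fun i _ =>
    (homogeneousComponent_mul_of_isHomogeneous (hL i) (ρ i) q).symm

lemma mem_degreePart : ρ ∈ degreePart N n ↔ ρ ∈ N ∧ VecHomog ρ n := by
  simp [degreePart, VecHomog, Submodule.mem_pi]

lemma finite_homogeneousSubmodule (n : ℕ) :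
    Module.Finite ℂ (homogeneousSubmodule (Fin 4) ℂ n) :=
  Module.Finite.iff_fg.mpr (homogeneousSubmodule_fg _ _ n)

lemma finite_degreePart (N : Submodule S4 (Fin 4 → S4)) (n : ℕ) :
    Module.Finite ℂ (degreePart N n) :=
  have : Module.Finite ℂ
      (Submodule.pi Set.univ fun _ : Fin 4 => homogeneousSubmodule (Fin 4) ℂ n) :=
    Module.Finite.iff_fg.mpr (Submodule.fg_pi fun _ => homogeneousSubmodule_fg _ _ n)
  Submodule.finiteDimensional_of_le inf_le_right

variable {ι : Type*} [Fintype ι] {τ : ι → Fin 4 → S4} {m e : ι → ℕ}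

lemma range_homogeneousCombination (hτ : ∀ i, VecHomog (τ i) (e i)) (hm : ∀ i, m i + e i = n) :
    LinearMap.range (homogeneousCombination τ m) =
      degreePart (Submodule.span S4 (Set.range τ)) n := by
  ext σ
  rw [mem_degreePart, Submodule.mem_span_range_iff_exists_fun]
  constructor
  · rintro ⟨b, rfl⟩
    refine ⟨⟨fun i => b i, rfl⟩, fun j => ?_⟩
    simp only [homogeneousCombination, LinearMap.coe_mk, AddHom.coe_mk, Finset.sum_apply]
    exact IsHomogeneous.sum _ _ _ fun i _ => hm i ▸ VecHomog.smul (b i).2 (hτ i) j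
  · rintro ⟨⟨c, rfl⟩, hσ⟩
    refine ⟨fun i => ⟨_, homogeneousComponent_isHomogeneous (m i) (c i)⟩, ?_⟩
    conv_rhs => rw [← hσ.vecComponent_eq_self, map_sum]
    exact Finset.sum_congr rfl fun i _ => by rw [← hm i, (hτ i).vecComponent_smul]

lemma finrank_degreePart_span (hτ : ∀ i, VecHomog (τ i) (e i)) (hm : ∀ i, m i + e i = n)
    (hrel : ∀ b : ι → S4, (∀ i, (b i).IsHomogeneous (m i)) → ∑ i, b i • τ i = 0 → b = 0) :
    Module.finrank ℂ (degreePart (Submodule.span S4 (Set.range τ)) n) =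
      ∑ i, Module.finrank ℂ (homogeneousSubmodule (Fin 4) ℂ (m i)) := by
  have hinj : Function.Injective (homogeneousCombination τ m) :=
    (injective_iff_map_eq_zero _).mpr fun b hb =>
      funext fun i => Subtype.ext (congrFun (hrel (fun i => b i) (fun i => (b i).2) hb) i)
  have (i : ι) := finite_homogeneousSubmodule (m i)
  rw [← range_homogeneousCombination hτ hm, LinearMap.finrank_range_of_inj hinj,
    Module.finrank_pi_fintype]

end GradedVectors

section JacobianSyzygies

variable {f : S4} {d e1 e2 n : ℕ} {ρ1 ρ2 ρ : Fin 4 → S4}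

lemma mem_AR4_of_smul_mem {a : S4} (ha : a ≠ 0) (h : a • ρ ∈ AR4 f) : ρ ∈ AR4 f := by
  rw [AR4, LinearMap.mem_ker, map_smul] at h
  exact (smul_eq_zero.mp h).resolve_left ha

lemma exists_eq_smul_of_smul_eq_smul {x y : S4} (hx : x ≠ 0) (hxy : IsRelPrime x y)
    {ρ σ : AR4 f} (h : y • ρ = x • σ) : ∃ τ : AR4 f, ρ = x • τ := by
  have hdvd (i : Fin 4) : x ∣ (ρ : Fin 4 → S4) i :=
    hxy.dvd_of_dvd_mul_left ⟨_, congrFun (congrArg Subtype.val h) i⟩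
  choose τ hτ using hdvd
  replace hτ : (ρ : Fin 4 → S4) = x • τ := funext hτ
  exact ⟨⟨τ, mem_AR4_of_smul_mem hx (hτ ▸ ρ.2)⟩, Subtype.ext hτ⟩

lemma vecComponent_mem_AR4 (hf : f.IsHomogeneous d) (hρ : ρ ∈ AR4 f) (q : ℕ) :
    vecComponent q ρ ∈ AR4 f := by
  have hjac (i : Fin 4) : (jacPair f (Pi.single i 1)).IsHomogeneous (d - 1) := by
    simpa [jacPair, Pi.single_apply] using hf.pderiv
  rw [AR4, LinearMap.mem_ker, map_vecComponent hjac, LinearMap.mem_ker.mp hρ, map_zero]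

lemma MinimalPair.isUnit_of_eq_smul (hmin : MinimalPair f ρ1 ρ2 e1 e2) (hf : f.IsHomogeneous d)
    {b : S4} {σ : Fin 4 → S4} (hσ : ρ1 = b • σ) : IsUnit b := by
  obtain ⟨hρ1, hρ1_ne, hρ1_homog, hρ1_min, -⟩ := hmin
  obtain ⟨i, hi⟩ := Function.ne_iff.mp hρ1_ne
  have hbσ : ρ1 i = b * σ i := congrFun hσ i
  obtain ⟨hb, hσi⟩ := mul_ne_zero_iff.mp (hbσ ▸ hi)
  obtain ⟨q, hq, hq_ne⟩ := exists_homogeneousComponent_ne_zero hσi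
  have he1 : e1 ≤ q := hρ1_min _ (vecComponent_mem_AR4 hf (mem_AR4_of_smul_mem hb (hσ ▸ hρ1)) q) q
    (fun h => hq_ne (congrFun h i)) (vecHomog_vecComponent q σ)
  have hdeg : b.totalDegree + (σ i).totalDegree = e1 := by
    rw [← totalDegree_mul_of_isDomain hb hσi, ← hbσ, (hρ1_homog i).totalDegree hi]
  exact isUnit_of_totalDegree_eq_zero hb (by lia)

lemma MinimalPair.linearIndependent (hmin : MinimalPair f ρ1 ρ2 e1 e2) (hf : f.IsHomogeneous d) :
    LinearIndependent S4 ![ρ1, ρ2] :=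
  linearIndependent_pair_of_forall_isUnit (fun _ _ => hmin.isUnit_of_eq_smul hf)
    hmin.2.2.2.2.2.2.2.1

lemma vdet_self_left (ρ1 ρ2 : Fin 4 → S4) : vdet ρ1 ρ2 ρ1 = 0 :=
  Matrix.det_zero_of_row_eq (M := EMat ρ1 ρ2 ρ1) (i := 1) (j := 3) (by decide) rfl

lemma vdet_self_right (ρ1 ρ2 : Fin 4 → S4) : vdet ρ1 ρ2 ρ2 = 0 :=
  Matrix.det_zero_of_row_eq (M := EMat ρ1 ρ2 ρ2) (i := 2) (j := 3) (by decide) rfl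

lemma isHomogeneous_vdet (h1 : VecHomog ρ1 e1) (h2 : VecHomog ρ2 e2) (h : VecHomog ρ n) :
    (vdet ρ1 ρ2 ρ).IsHomogeneous (n + (e1 + e2 + 1)) := by
  have hrow (i j : Fin 4) : (EMat ρ1 ρ2 ρ i j).IsHomogeneous (![1, e1, e2, n] i) := by
    fin_cases i
    exacts [isHomogeneous_X _ _, h1 j, h2 j, h j]
  have hsum : ∑ i, ![1, e1, e2, n] i = n + (e1 + e2 + 1) := by
    simp only [Fin.sum_univ_four, Matrix.cons_val]
    ring
  exact hsum ▸ isHomogeneous_det hrow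

lemma vdet_vecComponent (h1 : VecHomog ρ1 e1) (h2 : VecHomog ρ2 e2) (ρ : Fin 4 → S4) (q : ℕ) :
    vdet ρ1 ρ2 (vecComponent q ρ) =
      homogeneousComponent (q + (e1 + e2 + 1)) (vdet ρ1 ρ2 ρ) := by
  refine map_vecComponent (fun i => ?_) ρ q
  have hsingle : VecHomog (Pi.single i 1) 0 := fun j => by
    rcases eq_or_ne j i with rfl | hj
    · simpa using isHomogeneous_one _ _
    · simpa [hj] using isHomogeneous_zero _ _ _
  simpa using isHomogeneous_vdet h1 h2 hsingle

lemma vdet_mul_pderiv (hf : f.IsHomogeneous d) (h1 : ρ1 ∈ AR4 f) (h2 : ρ2 ∈ AR4 f)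
    (h : ρ ∈ AR4 f) (j : Fin 4) :
    vdet ρ1 ρ2 ρ * pderiv j f = (EMat ρ1 ρ2 ρ).adjugate j 0 * (d • f) := by
  have hrows : EMat ρ1 ρ2 ρ *ᵥ (fun i => pderiv i f) = Pi.single 0 (d • f) := by
    funext i
    fin_cases i
    exacts [hf.sum_X_mul_pderiv, h1, h2, h]
  exact det_mul_eq_adjugate_mul_of_mulVec_eq_single hrows j

lemma dvd_vdet (hf : f.IsHomogeneous d) (hred : Squarefree f) (h1 : ρ1 ∈ AR4 f)
    (h2 : ρ2 ∈ AR4 f) (h : ρ ∈ AR4 f) : f ∣ vdet ρ1 ρ2 ρ :=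
  dvd_of_forall_dvd_mul_pderiv hred fun j => by
    rw [vdet_mul_pderiv hf h1 h2 h, nsmul_eq_mul, ← mul_assoc]
    exact Dvd.intro_left _ rfl

lemma minorsVanish3_of_vdet_eq_zero (hd : d ≠ 0) (hf : f.IsHomogeneous d) (hf0 : f ≠ 0)
    (h1 : ρ1 ∈ AR4 f) (h2 : ρ2 ∈ AR4 f) (h : ρ ∈ AR4 f) (h0 : vdet ρ1 ρ2 ρ = 0) :
    MinorsVanish3 ρ1 ρ2 ρ := by
  intro j
  have hadj : (EMat ρ1 ρ2 ρ).adjugate j 0 = 0 := by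
    have hmul := vdet_mul_pderiv hf h1 h2 h j
    rw [h0, zero_mul, eq_comm] at hmul
    exact (mul_eq_zero.mp hmul).resolve_right (smul_ne_zero hd hf0)
  rw [Matrix.adjugate_fin_succ_eq_det_submatrix] at hadj
  convert (mul_eq_zero.mp hadj).resolve_left (pow_ne_zero _ (by simp)) using 2
  ext i k : 2
  fin_cases i <;> rfl

lemma AR4_inf_ker_vdet (hd : d ≠ 0) (hf : f.IsHomogeneous d) (hf0 : f ≠ 0)
    (hmin : MinimalPair f ρ1 ρ2 e1 e2) (htame : TamePair f ρ1 ρ2) :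
    AR4 f ⊓ LinearMap.ker (vdet ρ1 ρ2) = Submodule.span S4 {ρ1, ρ2} := by
  obtain ⟨h1, -, h1_homog, -, h2, h2_homog, -⟩ := hmin
  apply le_antisymm
  · refine fun ρ ⟨hρ, hρ0⟩ => mem_of_forall_vecComponent_mem fun q => ?_
    have hq := vecComponent_mem_AR4 hf hρ q
    have hq0 : vdet ρ1 ρ2 (vecComponent q ρ) = 0 := by
      rw [vdet_vecComponent h1_homog h2_homog, hρ0, map_zero]
    obtain ⟨a, b, hab⟩ := htame _ hq q (vecHomog_vecComponent q ρ)
      (minorsVanish3_of_vdet_eq_zero hd hf hf0 h1 h2 hq hq0)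
    exact Submodule.mem_span_pair.mpr ⟨a, b, hab.symm⟩
  · rw [Submodule.span_le]
    rintro _ (rfl | rfl)
    exacts [⟨h1, vdet_self_left _ _⟩, ⟨h2, vdet_self_right _ _⟩]

end JacobianSyzygies

section BourbakiIdeal

variable {f : S4} {d e1 e2 n : ℕ} {ρ1 ρ2 : Fin 4 → S4} {β : AR4 f →ₗ[S4] S4}

/-- `β` is the Bourbaki map `ρ ↦ det M(E, ρ1, ρ2, ρ) / f` of `AR(f)`; its range is `B(f)`. -/
def IsBourbakiMap (f : S4) (ρ1 ρ2 : Fin 4 → S4) (β : AR4 f →ₗ[S4] S4) : Prop :=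
  ∀ ρ : AR4 f, vdet ρ1 ρ2 ρ = β ρ * f

lemma exists_isBourbakiMap (hf : f.IsHomogeneous d) (hred : Squarefree f) (h1 : ρ1 ∈ AR4 f)
    (h2 : ρ2 ∈ AR4 f) : ∃ β, IsBourbakiMap f ρ1 ρ2 β := by
  have hmem (ρ : AR4 f) : vdet ρ1 ρ2 ρ ∈ Submodule.span S4 {f} :=
    Ideal.mem_span_singleton.mpr (dvd_vdet hf hred h1 h2 ρ.2)
  let e := LinearEquiv.toSpanNonzeroSingleton S4 S4 f hred.ne_zero
  refine ⟨e.symm ∘ₗ ((vdet ρ1 ρ2).domRestrict (AR4 f)).codRestrict _ hmem, fun ρ => ?_⟩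
  exact (congrArg Subtype.val (e.apply_symm_apply ⟨_, hmem ρ⟩)).symm

lemma exists_mem_ARgr_of_mem_Bf1 (hf : f.IsHomogeneous d) (h1 : VecHomog ρ1 e1)
    (h2 : VecHomog ρ2 e2) (hn : e1 + e2 + n = d) {h : S4} (hh : h ∈ Bf1 f ρ1 ρ2) :
    ∃ ρ ∈ ARgr f n, vdet ρ1 ρ2 ρ = h * f := by
  obtain ⟨hh1, ρ, hρ, hvdet⟩ := hh
  refine ⟨vecComponent n ρ, mem_degreePart.mpr
    ⟨vecComponent_mem_AR4 hf hρ n, vecHomog_vecComponent n ρ⟩, ?_⟩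
  rw [vdet_vecComponent h1 h2, hvdet, show n + (e1 + e2 + 1) = 1 + d by lia]
  exact homogeneousComponent_eq_self (IsHomogeneous.mul hh1 hf)

lemma map_vdet_ARgr (hf : f.IsHomogeneous d) (hred : Squarefree f) (h1 : ρ1 ∈ AR4 f)
    (h1_homog : VecHomog ρ1 e1) (h2 : ρ2 ∈ AR4 f) (h2_homog : VecHomog ρ2 e2)
    (hn : e1 + e2 + n = d) :
    (ARgr f n).map ((vdet ρ1 ρ2).restrictScalars ℂ) =
      (Bf1 f ρ1 ρ2).map (LinearMap.mulRight ℂ f) := by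
  apply le_antisymm
  · rintro _ ⟨ρ, hρ, rfl⟩
    obtain ⟨hρ, hρ_homog⟩ := mem_degreePart.mp hρ
    obtain ⟨h, hh⟩ := dvd_vdet hf hred h1 h2 hρ
    have hcomp : homogeneousComponent 1 h * f = vdet ρ1 ρ2 ρ := by
      rw [← homogeneousComponent_mul_of_isHomogeneous hf, mul_comm, ← hh]
      refine homogeneousComponent_eq_self ?_
      convert isHomogeneous_vdet h1_homog h2_homog hρ_homog using 1
      lia
    exact ⟨_, ⟨homogeneousComponent_isHomogeneous 1 h, ρ, hρ, hcomp.symm⟩, hcomp⟩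
  · rintro _ ⟨h, hh, rfl⟩
    exact exists_mem_ARgr_of_mem_Bf1 hf h1_homog h2_homog hn hh

lemma finrank_ARgr_inf_ker_vdet (hd : d ≠ 0) (hf : f.IsHomogeneous d) (hf0 : f ≠ 0)
    (hmin : MinimalPair f ρ1 ρ2 e1 e2) (htame : TamePair f ρ1 ρ2) (he : e2 ≤ n) :
    Module.finrank ℂ ↥(ARgr f n ⊓ LinearMap.ker ((vdet ρ1 ρ2).restrictScalars ℂ)) =
      Module.finrank ℂ (homogeneousSubmodule (Fin 4) ℂ (n - e1)) +
        Module.finrank ℂ (homogeneousSubmodule (Fin 4) ℂ (n - e2)) := by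
  have hinf : ARgr f n ⊓ LinearMap.ker ((vdet ρ1 ρ2).restrictScalars ℂ) =
      degreePart (Submodule.span S4 (Set.range ![ρ1, ρ2])) n := by
    rw [Matrix.range_cons_cons_empty, ← AR4_inf_ker_vdet hd hf hf0 hmin htame]
    exact inf_right_comm _ _ _
  have hlin := Fintype.linearIndependent_iff.mp (hmin.linearIndependent hf)
  obtain ⟨-, -, h1_homog, -, -, h2_homog, h12, -⟩ := hmin
  have hhomog : ∀ i, VecHomog (![ρ1, ρ2] i) (![e1, e2] i) :=
    Fin.forall_fin_two.mpr ⟨h1_homog, h2_homog⟩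
  have hdeg : ∀ i, ![n - e1, n - e2] i + ![e1, e2] i = n :=
    Fin.forall_fin_two.mpr ⟨Nat.sub_add_cancel (h12.trans he), Nat.sub_add_cancel he⟩
  rw [hinf, finrank_degreePart_span hhomog hdeg fun b _ hb => funext (hlin b hb)]
  exact Fin.sum_univ_two _

lemma arDim_eq_add_finrank_Bf1 (hd : d ≠ 0) (hf : f.IsHomogeneous d) (hred : Squarefree f)
    (hmin : MinimalPair f ρ1 ρ2 e1 e2) (htame : TamePair f ρ1 ρ2) (hn : e1 + e2 + n = d)
    (he : e2 ≤ n) :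
    arDim f n = Module.finrank ℂ (homogeneousSubmodule (Fin 4) ℂ (n - e1)) +
      Module.finrank ℂ (homogeneousSubmodule (Fin 4) ℂ (n - e2)) +
      Module.finrank ℂ (Bf1 f ρ1 ρ2) := by
  have : Module.Finite ℂ (ARgr f n) := finite_degreePart (AR4 f) n
  set v := ((vdet ρ1 ρ2).restrictScalars ℂ).domRestrict (ARgr f n) with hv
  have hinj : Function.Injective (LinearMap.mulRight ℂ f) := mul_left_injective₀ hred.ne_zero
  have hrange : Module.finrank ℂ (LinearMap.range v) = Module.finrank ℂ (Bf1 f ρ1 ρ2) := by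
    obtain ⟨h1, -, h1_homog, -, h2, h2_homog, -⟩ := hmin
    rw [hv, LinearMap.range_domRestrict, map_vdet_ARgr hf hred h1 h1_homog h2 h2_homog hn]
    exact (Submodule.equivMapOfInjective _ hinj _).finrank_eq.symm
  have hker : Module.finrank ℂ (LinearMap.ker v) =
      Module.finrank ℂ (homogeneousSubmodule (Fin 4) ℂ (n - e1)) +
        Module.finrank ℂ (homogeneousSubmodule (Fin 4) ℂ (n - e2)) := by
    rw [hv, LinearMap.ker_domRestrict, ← Submodule.finrank_map_subtype_eq,
      Submodule.map_comap_subtype, finrank_ARgr_inf_ker_vdet hd hf hred.ne_zero hmin htame he]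
  rw [arDim, ← LinearMap.finrank_range_add_finrank_ker v, hrange, hker, add_comm]

lemma arDim_of_isNearlyFreeWith {d1 d2 d3 : ℕ} (h : IsNearlyFreeWith f d d1 d2 d3) :
    arDim f d3 = Module.finrank ℂ (homogeneousSubmodule (Fin 4) ℂ (d3 - d1)) +
      Module.finrank ℂ (homogeneousSubmodule (Fin 4) ℂ (d3 - d2)) + 2 := by
  obtain ⟨h12, h23, -, ρ, a, hmem, hρ0, hρ1, hρ2, hρ3, hgen, ha0, ha1, ha2, ha3, -, -, hrel⟩ := h
  have hspan : AR4 f = Submodule.span S4 (Set.range ρ) := by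
    refine le_antisymm (fun σ hσ => ?_) (Submodule.span_le.mpr (Set.range_subset_iff.mpr hmem))
    obtain ⟨b, rfl⟩ := hgen σ hσ
    exact Submodule.sum_smul_mem _ _ fun i _ => Submodule.mem_span_of_mem ⟨i, rfl⟩
  have hρ : ∀ i, VecHomog (ρ i) (![d1, d2, d3, d3] i) :=
    Fin.forall_fin_succ.mpr ⟨hρ0, Fin.forall_fin_succ.mpr
      ⟨hρ1, Fin.forall_fin_two.mpr ⟨hρ2, hρ3⟩⟩⟩
  have hdeg (i : Fin 4) : ![d3 - d1, d3 - d2, 0, 0] i + ![d1, d2, d3, d3] i = d3 := by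
    fin_cases i <;> simp <;> lia
  have ha (i : Fin 4) : (a i).IsHomogeneous (![d3 - d1, d3 - d2, 0, 0] i + 1) := by
    fin_cases i
    exacts [ha0, ha1, ha2, ha3]
  have hcoeff (b : Fin 4 → S4) (hb : ∀ i, (b i).IsHomogeneous (![d3 - d1, d3 - d2, 0, 0] i))
      (hbρ : ∑ i, b i • ρ i = 0) : b = 0 := by
    obtain ⟨c, rfl⟩ := hrel b hbρ
    funext i
    have hdvd : a i ∣ (c • a) i := by
      rw [Pi.smul_apply, smul_eq_mul]
      exact dvd_mul_left _ _
    exact eq_zero_of_isHomogeneous_of_dvd (ha i) (hb i) (Nat.lt_add_one _) hdvd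
  have hconst : Module.finrank ℂ (homogeneousSubmodule (Fin 4) ℂ 0) = 1 := by
    rw [homogeneousSubmodule_zero, Submodule.one_eq_span, finrank_span_singleton one_ne_zero]
  calc arDim f d3 = Module.finrank ℂ (degreePart (Submodule.span S4 (Set.range ρ)) d3) :=
        hspan ▸ rfl
    _ = Module.finrank ℂ (homogeneousSubmodule (Fin 4) ℂ (d3 - d1)) +
          Module.finrank ℂ (homogeneousSubmodule (Fin 4) ℂ (d3 - d2)) +
          Module.finrank ℂ (homogeneousSubmodule (Fin 4) ℂ 0) +
          Module.finrank ℂ (homogeneousSubmodule (Fin 4) ℂ 0) :=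
        (finrank_degreePart_span hρ hdeg hcoeff).trans (Fin.sum_univ_four _)
    _ = _ := by rw [hconst]

end BourbakiIdeal

section NearlyFree

variable {f : S4} {d e1 e2 n : ℕ} {ρ1 ρ2 : Fin 4 → S4} {β : AR4 f →ₗ[S4] S4}

lemma IsBourbakiMap.ker_eq_span (hβ : IsBourbakiMap f ρ1 ρ2 β) (hd : d ≠ 0)
    (hf : f.IsHomogeneous d) (hf0 : f ≠ 0) (hmin : MinimalPair f ρ1 ρ2 e1 e2)
    (htame : TamePair f ρ1 ρ2) :
    LinearMap.ker β = Submodule.span S4 {⟨ρ1, hmin.1⟩, ⟨ρ2, hmin.2.2.2.2.1⟩} := by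
  ext ρ
  have hker : β ρ = 0 ↔ (ρ : Fin 4 → S4) ∈ AR4 f ⊓ LinearMap.ker (vdet ρ1 ρ2) := by
    simp [hβ ρ, hf0]
  rw [LinearMap.mem_ker, hker, AR4_inf_ker_vdet hd hf hf0 hmin htame, Submodule.mem_span_pair,
    Submodule.mem_span_pair]
  simp [Subtype.ext_iff]

lemma MinimalPair.linearIndependent_AR4 (hmin : MinimalPair f ρ1 ρ2 e1 e2)
    (hf : f.IsHomogeneous d) :
    LinearIndependent S4 ![(⟨ρ1, hmin.1⟩ : AR4 f), ⟨ρ2, hmin.2.2.2.2.1⟩] := by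
  refine LinearIndependent.of_comp (AR4 f).subtype ?_
  convert hmin.linearIndependent hf using 1
  exact funext (Fin.forall_fin_two.mpr ⟨rfl, rfl⟩)

/- If `β ρ = 1` then `β (X i • ρ) = X i`, so `B(f)₁` would contain all four coordinates. -/
lemma IsBourbakiMap.one_notMem_range (hβ : IsBourbakiMap f ρ1 ρ2 β)
    (hB : Module.finrank ℂ (Bf1 f ρ1 ρ2) = 2) : 1 ∉ LinearMap.range β := by
  rintro ⟨ρ, hρ⟩
  have hX (i : Fin 4) : X i ∈ Bf1 f ρ1 ρ2 :=
    ⟨isHomogeneous_X _ i, X i • ρ, (AR4 f).smul_mem _ ρ.2, by simp [hβ ρ, hρ]⟩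
  have : Module.Finite ℂ (Bf1 f ρ1 ρ2) := Module.finite_of_finrank_pos (by lia)
  have hlin : LinearIndependent ℂ fun i => (⟨X i, hX i⟩ : Bf1 f ρ1 ρ2) :=
    LinearIndependent.of_comp (Bf1 f ρ1 ρ2).subtype (linearIndependent_X _ _)
  have hcard := hlin.fintype_card_le_finrank
  rw [hB, Fintype.card_fin] at hcard
  lia

lemma IsBourbakiMap.exists_linearIndependent (hβ : IsBourbakiMap f ρ1 ρ2 β)
    (hf : f.IsHomogeneous d) (hf0 : f ≠ 0) (h1 : VecHomog ρ1 e1) (h2 : VecHomog ρ2 e2)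
    (hn : e1 + e2 + n = d) (hB : Module.finrank ℂ (Bf1 f ρ1 ρ2) = 2) :
    ∃ r s : AR4 f, VecHomog r n ∧ VecHomog s n ∧ (β r).IsHomogeneous 1 ∧
      (β s).IsHomogeneous 1 ∧ LinearIndependent ℂ ![β r, β s] := by
  have : Module.Finite ℂ (Bf1 f ρ1 ρ2) := Module.finite_of_finrank_pos (by lia)
  let b := Module.finBasisOfFinrankEq ℂ (Bf1 f ρ1 ρ2) hB
  choose τ hτ hvdet using fun i => exists_mem_ARgr_of_mem_Bf1 hf h1 h2 hn (b i).2
  replace hτ (i : Fin 2) := mem_degreePart.mp (hτ i)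
  have hβτ (i : Fin 2) : β ⟨τ i, (hτ i).1⟩ = b i :=
    mul_right_cancel₀ hf0 ((hβ _).symm.trans (hvdet i))
  refine ⟨⟨τ 0, (hτ 0).1⟩, ⟨τ 1, (hτ 1).1⟩, (hτ 0).2, (hτ 1).2, hβτ 0 ▸ (b 0).2.1,
    hβτ 1 ▸ (b 1).2.1, ?_⟩
  have hb := b.linearIndependent.map' _ (Submodule.ker_subtype _)
  have hpair : ![(b 0 : S4), b 1] = (Bf1 f ρ1 ρ2).subtype ∘ b :=
    funext (Fin.forall_fin_two.mpr ⟨rfl, rfl⟩)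
  rw [hβτ, hβτ, hpair]
  exact hb

lemma MinimalPair.le_of_apply_ne_zero (hmin : MinimalPair f ρ1 ρ2 e1 e2)
    (hβ : IsBourbakiMap f ρ1 ρ2 β) (hf0 : f ≠ 0) {ρ : AR4 f} (hρ : VecHomog ρ n) (h : β ρ ≠ 0) :
    e2 ≤ n := by
  refine hmin.2.2.2.2.2.2.2.2 ρ ρ.2 n hρ fun a ha => ?_
  have hvdet := hβ ρ
  rw [ha, map_smul, vdet_self_left, smul_zero] at hvdet
  exact mul_ne_zero h hf0 hvdet.symm

lemma exists_isHomogeneous_koszul_syzygy {p q r s : AR4 f}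
    (hker : LinearMap.ker β = Submodule.span S4 {p, q}) (hp : VecHomog p e1) (hq : VecHomog q e2)
    (hr : VecHomog r n) (hs : VecHomog s n) (hβr : (β r).IsHomogeneous 1)
    (hβs : (β s).IsHomogeneous 1) (h1 : e1 ≤ n) (h2 : e2 ≤ n) :
    ∃ a b : S4, a.IsHomogeneous (n - e1 + 1) ∧ b.IsHomogeneous (n - e2 + 1) ∧
      β s • r - β r • s = a • p + b • q := by
  set σ : AR4 f := β s • r - β r • s
  obtain ⟨u, v, huv⟩ := exists_koszul_syzygy hker s r
  have hσ_homog : VecHomog σ (n + 1) := fun i => by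
    rw [add_comm n 1]
    exact (VecHomog.smul hβs hr i).sub (VecHomog.smul hβr hs i)
  have hτ : ∀ i, VecHomog (![(p : Fin 4 → S4), q] i) (![e1, e2] i) :=
    Fin.forall_fin_two.mpr ⟨hp, hq⟩
  have hm : ∀ i, ![n - e1 + 1, n - e2 + 1] i + ![e1, e2] i = n + 1 :=
    Fin.forall_fin_two.mpr ⟨by simp; lia, by simp; lia⟩
  have hσ_mem : (σ : Fin 4 → S4) ∈
      degreePart (Submodule.span S4 (Set.range ![(p : Fin 4 → S4), q])) (n + 1) := by
    rw [mem_degreePart, Matrix.range_cons_cons_empty, Submodule.mem_span_pair]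
    exact ⟨⟨u, v, congrArg Subtype.val huv.symm⟩, hσ_homog⟩
  rw [← range_homogeneousCombination hτ hm] at hσ_mem
  obtain ⟨b, hb⟩ := hσ_mem
  refine ⟨b 0, b 1, (b 0).2, (b 1).2, Subtype.ext (hb.symm.trans ?_)⟩
  exact Fin.sum_univ_two _

lemma isNearlyFreeWith_of_range_eq_span_pair {p q r s : AR4 f}
    (hker : LinearMap.ker β = Submodule.span S4 {p, q}) (hpq : LinearIndependent S4 ![p, q])
    (hrange : LinearMap.range β = Ideal.span {β r, β s})
    (hlin : LinearIndependent ℂ ![β r, β s]) (hp : VecHomog p e1) (hq : VecHomog q e2)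
    (hr : VecHomog r n) (hs : VecHomog s n) (hβr : (β r).IsHomogeneous 1)
    (hβs : (β s).IsHomogeneous 1) (h12 : e1 ≤ e2) (h2 : e2 ≤ n) (hn : e1 + e2 + n = d) :
    IsNearlyFreeWith f d e1 e2 n := by
  have hβs0 : β s ≠ 0 := hlin.ne_zero 1
  obtain ⟨a, b, ha, hb, hab⟩ :=
    exists_isHomogeneous_koszul_syzygy hker hp hq hr hs hβr hβs (h12.trans h2) h2
  refine ⟨h12, h2, hn, ![p, q, r, s], ![-a, -b, β s, -β r], ?_, hp, hq, hr, hs,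
    fun σ hσ => ?_, ha.neg, hb.neg, hβs, hβr.neg, fun h => hβs0 (congrFun h 2), ?_,
    fun c hc => ?_⟩
  · exact Fin.forall_fin_succ.mpr ⟨p.2, Fin.forall_fin_succ.mpr
      ⟨q.2, Fin.forall_fin_two.mpr ⟨r.2, s.2⟩⟩⟩
  · obtain ⟨c, hc⟩ := exists_eq_combination_of_range_eq_span_pair hker hrange ⟨σ, hσ⟩
    refine ⟨c, ?_⟩
    rw [Fin.sum_univ_four]
    exact congrArg Subtype.val hc
  · have hrel : -a • p + -b • q + β s • r + -β r • s = 0 := by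
      linear_combination (norm := module) hab
    rw [Fin.sum_univ_four]
    exact congrArg Subtype.val hrel
  · rw [Fin.sum_univ_four] at hc
    exact exists_eq_smul_of_combination_eq_zero hker hpq hβs0
      (isRelPrime_of_linearIndependent hβr hβs hlin) hab (Subtype.ext hc)

lemma isNearlyFreeWith_of_finrank_Bf1 (hd : d ≠ 0) (hf : f.IsHomogeneous d)
    (hred : Squarefree f) (hmin : MinimalPair f ρ1 ρ2 e1 e2) (htame : TamePair f ρ1 ρ2)
    (hn : e1 + e2 + n = d) (hB : Module.finrank ℂ (Bf1 f ρ1 ρ2) = 2) :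
    IsNearlyFreeWith f d e1 e2 n := by
  obtain ⟨h1, -, h1_homog, -, h2, h2_homog, h12, -⟩ := id hmin
  obtain ⟨β, hβ⟩ := exists_isBourbakiMap hf hred h1 h2
  obtain ⟨r, s, hr, hs, hβr, hβs, hlin⟩ :=
    hβ.exists_linearIndependent hf hred.ne_zero h1_homog h2_homog hn hB
  have hβr0 : β r ≠ 0 := hlin.ne_zero 0
  have hcop : IsRelPrime (β r) (β s) := isRelPrime_of_linearIndependent hβr hβs hlin
  have hprime : (Ideal.span {β r, β s}).IsPrime := by
    refine isPrime_span_of_forall_isHomogeneous_one ?_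
    rintro _ (rfl | rfl)
    exacts [hβr, hβs]
  have hker := hβ.ker_eq_span hd hf hred.ne_zero hmin htame
  have hpq := hmin.linearIndependent_AR4 hf
  have hrange : LinearMap.range β = Ideal.span {β r, β s} :=
    range_eq_span_pair_of_isPrime hker hpq hβr0 hprime
      (fun _ _ => exists_eq_smul_of_smul_eq_smul hβr0 hcop) (hβ.one_notMem_range hB)
  have hn2 : e2 ≤ n := hmin.le_of_apply_ne_zero hβ hred.ne_zero hr hβr0
  exact isNearlyFreeWith_of_range_eq_span_pair hker hpq hrange hlin h1_homog h2_homog hr hs hβr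
    hβs h12 hn2 hn

end NearlyFree

/-- **Proposition 5.1.** A tame surface `D : f = 0` is nearly free with exponents
`e1, e2, e3 + 1` if and only if the degree-one part of the Bourbaki ideal `B(f)` is
two-dimensional. -/
theorem prop_5_1 (f : S4) (d e1 e2 e3 : ℕ) (ρ1 ρ2 : Fin 4 → S4)
    (hd : 1 ≤ d) (hf : f.IsHomogeneous d) (hred : Squarefree f)
    (hmin : MinimalPair f ρ1 ρ2 e1 e2) (htame : TamePair f ρ1 ρ2)
    (he3 : e1 + e2 + e3 + 1 = d) :
    IsNearlyFreeWith f d e1 e2 (e3 + 1) ↔ Module.finrank ℂ (Bf1 f ρ1 ρ2) = 2 := by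
  have hd0 : d ≠ 0 := Nat.one_le_iff_ne_zero.mp hd
  constructor
  · intro hfree
    have hdim := arDim_eq_add_finrank_Bf1 hd0 hf hred hmin htame he3 hfree.2.1
    rw [arDim_of_isNearlyFreeWith hfree] at hdim
    exact (Nat.add_left_cancel hdim).symm
  · exact isNearlyFreeWith_of_finrank_Bf1 hd0 hf hred hmin htame he3
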